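/- Let n ≥ 1, let p > 1 be a real number, and let f : ℝⁿ → ℝ be a continuously differentiable, non-negative, weakly subharmonic function (∫ ⟪∇f, ∇ψ⟫ ≤ 0 for every non-negative smooth compactly supported ψ). Then there is a constant C > 0, depending only on p, such that for every R > 0 the reverse Poincaré inequality ∫_{B_R(0)} f(x)^{p−2} ‖∇f(x)‖² dx ≤ (C/R²) ∫_{B_{2R}(0)} f(x)^p dx holds, where B_r(0) is the Euclidean ball of radius r about the origin and for 1 < p < 2 the integrand on the left is interpreted as 0 at points where f vanishes; one may take C = 4/(p−1)². (This is the reverse Poincaré inequality derived in the proof of the paper's Proposition 2.1 by choosing a cutoff function φ ≡ 1 on B_R, φ ≡ 0 off B_{2R}, with ‖∇φ‖ ≤ 1/R.) -/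

import Mathlib

open MeasureTheory Metric Real Filter Asymptotics RealInnerProductSpace

noncomputable section

/-- `f` is weakly subharmonic: `∫ ⟪∇f, ∇ψ⟫ ≤ 0` for every non-negative smooth
compactly supported test function `ψ`. -/
def WeaklySubharmonic {n : ℕ} (f : EuclideanSpace ℝ (Fin n) → ℝ) : Prop :=
  ∀ ψ : EuclideanSpace ℝ (Fin n) → ℝ, ContDiff ℝ (⊤ : ℕ∞) ψ → HasCompactSupport ψ →
    (∀ x, 0 ≤ ψ x) → ∫ x, ⟪gradient f x, gradient ψ x⟫ ≤ 0

/-!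
For `f > 0` the inequality comes from testing subharmonicity with `φ² f^(p-1)`, `φ` a cutoff, and
completing the square, which gives `∫ φ² f^(p-2) ‖∇f‖² ≤ 4/(p-1)² ∫ f^p ‖∇φ‖²`. This test function
is only `C¹`; mollification makes it admissible. For `f ≥ 0` one applies the result to `f + δ`
and lets `δ → 0` with Fatou's lemma, using that `∇f = 0` at the zeros of `f`. A `C¹` cutoff that
drops from `1` to `0` over distance `R` cannot satisfy `‖∇φ‖ ≤ 1/R` exactly, so the constant
`4/(p-1)²` is reached through cutoffs with `‖∇φ‖ ≤ 1/κ` as `κ ↑ R`.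
-/

open Topology Convolution ContinuousLinearMap Gradient
open scoped NNReal ContDiff

section Mollification

variable {E F : Type*} [NormedAddCommGroup E] [NormedSpace ℝ E] [FiniteDimensional ℝ E]
  [NormedAddCommGroup F] [NormedSpace ℝ F] {g : E → F}

section Haar

variable [MeasurableSpace E] [BorelSpace E] {μ : Measure E} [μ.IsAddHaarMeasure]
  (ρ : ContDiffBump (0 : E))

lemma contDiff_normed_convolution (hg : Continuous g) :
    ContDiff ℝ ∞ (ρ.normed μ ⋆[lsmul ℝ ℝ, μ] g) :=
  ρ.hasCompactSupport_normed.contDiff_convolution_left _ ρ.contDiff_normed hg.locallyIntegrable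

lemma tsupport_normed_convolution_subset :
    tsupport (ρ.normed μ ⋆[lsmul ℝ ℝ, μ] g) ⊆ cthickening ρ.rOut (tsupport g) := by
  have h_support : Function.support (ρ.normed μ ⋆[lsmul ℝ ℝ, μ] g) ⊆
      thickening ρ.rOut (Function.support g) := by
    rw [← ball_add_zero, ← ρ.support_normed_eq (μ := μ)]
    exact support_convolution_subset _
  exact (closure_mono h_support).trans <| (closure_thickening_subset_cthickening _ _).trans <|
    cthickening_subset_of_subset _ subset_closure

lemma fderiv_normed_convolution (hg : ContDiff ℝ 1 g) (hg_supp : HasCompactSupport g) :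
    fderiv ℝ (ρ.normed μ ⋆[lsmul ℝ ℝ, μ] g) = ρ.normed μ ⋆[lsmul ℝ ℝ, μ] fderiv ℝ g := by
  ext1 x
  exact (hg_supp.hasFDerivAt_convolution_right (lsmul ℝ ℝ)
    ρ.continuous_normed.locallyIntegrable hg x).fderiv

lemma lipschitzWith_normed_convolution {K : ℝ≥0} (hg : LipschitzWith K g) :
    LipschitzWith K (ρ.normed μ ⋆[lsmul ℝ ℝ, μ] g) := by
  have h_int : ∀ x, Integrable (fun t ↦ ρ.normed μ t • g (x - t)) μ := fun x ↦
    (ρ.continuous_normed.smul (hg.continuous.comp (by fun_prop))).integrable_of_hasCompactSupport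
      ρ.hasCompactSupport_normed.smul_right
  refine LipschitzWith.of_dist_le_mul fun x y ↦ ?_
  calc dist ((ρ.normed μ ⋆[lsmul ℝ ℝ, μ] g) x) ((ρ.normed μ ⋆[lsmul ℝ ℝ, μ] g) y)
      = ‖∫ t, ρ.normed μ t • (g (x - t) - g (y - t)) ∂μ‖ := by
        simp only [dist_eq_norm, convolution, lsmul_apply, smul_sub]
        rw [integral_sub (h_int x) (h_int y)]
    _ ≤ ∫ t, ρ.normed μ t * (K * dist x y) ∂μ := by
        refine norm_integral_le_of_norm_le (ρ.integrable_normed.mul_const _) (.of_forall fun t ↦ ?_)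
        rw [norm_smul, Real.norm_of_nonneg (ρ.nonneg_normed t), ← dist_eq_norm]
        gcongr
        · exact ρ.nonneg_normed t
        · simpa only [dist_sub_right] using hg.dist_le_mul (x - t) (y - t)
    _ = K * dist x y := by rw [integral_mul_const, ρ.integral_normed, one_mul]

end Haar

lemma exists_contDiff_norm_fderiv_sub_le {ψ : E → ℝ} (hψ : ContDiff ℝ 1 ψ)
    (hψ_supp : HasCompactSupport ψ) (hψ0 : ∀ x, 0 ≤ ψ x) {δ ε : ℝ} (hδ : 0 < δ) (hε : 0 < ε) :
    ∃ φ : E → ℝ, ContDiff ℝ ∞ φ ∧ (∀ x, 0 ≤ φ x) ∧ tsupport φ ⊆ cthickening δ (tsupport ψ) ∧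
      ∀ x, ‖fderiv ℝ ψ x - fderiv ℝ φ x‖ ≤ ε := by
  borelize E
  have h_cont : Continuous (fderiv ℝ ψ) := hψ.continuous_fderiv one_ne_zero
  obtain ⟨η, hη, h_unif⟩ := Metric.uniformContinuous_iff.1
    ((hψ_supp.fderiv ℝ).uniformContinuous_of_continuous h_cont) ε hε
  let ρ : ContDiffBump (0 : E) :=
    ⟨min η δ / 2, min η δ, half_pos (lt_min hη hδ), half_lt_self (lt_min hη hδ)⟩
  refine ⟨ρ.normed .addHaar ⋆[lsmul ℝ ℝ, .addHaar] ψ, contDiff_normed_convolution ρ hψ.continuous,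
    fun x ↦ integral_nonneg fun t ↦ mul_nonneg (ρ.nonneg_normed t) (hψ0 _),
    (tsupport_normed_convolution_subset ρ).trans (cthickening_mono (min_le_right η δ) _),
    fun x ↦ ?_⟩
  rw [fderiv_normed_convolution ρ hψ hψ_supp, ← dist_eq_norm, dist_comm]
  exact ρ.dist_normed_convolution_le h_cont.aestronglyMeasurable fun y hy ↦
    (h_unif ((mem_ball.1 hy).trans_le (min_le_left η δ))).le

lemma exists_contDiff_cutoff (S : Set E) {κ δ : ℝ} (hκ : 0 < κ) (hκδ : κ < δ) :
    ∃ φ : E → ℝ, ContDiff ℝ ∞ φ ∧ (∀ x ∈ S, φ x = 1) ∧ tsupport φ ⊆ thickening δ S ∧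
      ∀ x, ‖fderiv ℝ φ x‖ ≤ κ⁻¹ := by
  borelize E
  obtain ⟨ε, hε, hεδ⟩ : ∃ ε, 0 < ε ∧ ε + (κ + ε) < δ := ⟨(δ - κ) / 3, by linarith, by linarith⟩
  let ρ : ContDiffBump (0 : E) := ⟨ε / 2, ε, half_pos hε, half_lt_self hε⟩
  let χ : E → ℝ := fun x ↦ thickenedIndicator hκ (thickening ε S) x
  have hχ_lip : LipschitzWith κ.toNNReal⁻¹ χ := by
    have h := NNReal.isometry_coe.lipschitz.comp
      (lipschitzWith_thickenedIndicator hκ (thickening ε S))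
    rwa [one_mul] at h
  have hχ_one : ∀ x ∈ thickening ε S, χ x = 1 := fun x hx ↦ by
    simp only [χ, thickenedIndicator_one hκ _ hx, NNReal.coe_one]
  have hχ_supp : tsupport χ ⊆ cthickening (κ + ε) S := by
    have h_support : Function.support χ ⊆ thickening κ (thickening ε S) := fun x hx ↦ by
      by_contra hx'
      exact hx (by simp only [χ, thickenedIndicator_zero hκ _ hx', NNReal.coe_zero])
    exact (closure_mono (h_support.trans (thickening_thickening_subset κ ε S))).trans
      (closure_thickening_subset_cthickening _ _)
  refine ⟨ρ.normed .addHaar ⋆[lsmul ℝ ℝ, .addHaar] χ,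
    contDiff_normed_convolution ρ hχ_lip.continuous, fun x hx ↦ ?_, ?_, fun x ↦ ?_⟩
  · have h_ball : ∀ y ∈ ball x ρ.rOut, χ y = 1 := fun y hy ↦
      hχ_one y (mem_thickening_iff.2 ⟨x, hx, hy⟩)
    have hx_one := h_ball x (mem_ball_self hε)
    rw [ρ.normed_convolution_eq_right fun y hy ↦ (h_ball y hy).trans hx_one.symm, hx_one]
  · calc tsupport (ρ.normed .addHaar ⋆[lsmul ℝ ℝ, .addHaar] χ)
        ⊆ cthickening ε (tsupport χ) := tsupport_normed_convolution_subset ρ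
      _ ⊆ cthickening ε (cthickening (κ + ε) S) := cthickening_subset_of_subset _ hχ_supp
      _ ⊆ cthickening (ε + (κ + ε)) S := cthickening_cthickening_subset hε.le (by positivity) S
      _ ⊆ thickening δ S := cthickening_subset_thickening' (hε.trans (by linarith)) hεδ S
  · simpa only [NNReal.coe_inv, Real.coe_toNNReal κ hκ.le] using
      norm_fderiv_le_of_lipschitz ℝ (lipschitzWith_normed_convolution ρ hχ_lip)

end Mollification

section Gradient

variable {E : Type*} [NormedAddCommGroup E] [InnerProductSpace ℝ E] [CompleteSpace E]

lemma norm_gradient_eq_norm_fderiv (f : E → ℝ) (x : E) : ‖∇ f x‖ = ‖fderiv ℝ f x‖ :=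
  LinearIsometryEquiv.norm_map _ _

lemma continuous_gradient_of_contDiff_one {f : E → ℝ} (hf : ContDiff ℝ 1 f) :
    Continuous (∇ f) :=
  (LinearIsometryEquiv.continuous _).comp (hf.continuous_fderiv one_ne_zero)

lemma tsupport_gradient_subset (f : E → ℝ) : tsupport (∇ f) ⊆ tsupport f := by
  refine (closure_mono fun x hx ↦ ?_).trans (tsupport_fderiv_subset ℝ)
  exact fun h ↦ hx (by rw [gradient, h, map_zero])

lemma gradient_add_const (f : E → ℝ) (c : ℝ) : ∇ (fun x ↦ f x + c) = ∇ f := by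
  ext1 x
  rw [gradient, gradient, fderiv_add_const]

lemma gradient_eq_zero_of_isLocalMin {f : E → ℝ} {x : E} (h : IsLocalMin f x) : ∇ f x = 0 := by
  rw [gradient, h.fderiv_eq_zero, map_zero]

/- At a zero of `f` the gradient vanishes, so that the value of `0 ^ q` does not matter. -/
lemma tendsto_add_rpow_mul_norm_gradient_sq {f : E → ℝ} (hf0 : ∀ x, 0 ≤ f x) (q : ℝ) (x : E) :
    Tendsto (fun δ ↦ (f x + δ) ^ q * ‖∇ f x‖ ^ 2) (𝓝 0) (𝓝 (f x ^ q * ‖∇ f x‖ ^ 2)) := by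
  rcases eq_or_ne (f x) 0 with hx | hx
  · have h_min : IsLocalMin f x := .of_forall fun y ↦ hx.trans_le (hf0 y)
    simp [gradient_eq_zero_of_isLocalMin h_min]
  · have h_add : Tendsto (fun δ ↦ f x + δ) (𝓝 0) (𝓝 (f x)) := by
      simpa only [add_zero] using (continuous_const_add (f x)).tendsto 0
    exact (h_add.rpow_const (Or.inl hx)).mul_const _

lemma gradient_sq_mul_rpow {u φ : E → ℝ} {x : E} (hu : DifferentiableAt ℝ u x)
    (hφ : DifferentiableAt ℝ φ x) (hux : u x ≠ 0) (q : ℝ) :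
    ∇ (fun y ↦ φ y ^ 2 * u y ^ q) x =
      (q * φ x ^ 2 * u x ^ (q - 1)) • ∇ u x + (2 * φ x * u x ^ q) • ∇ φ x := by
  have h := (hφ.hasFDerivAt.pow 2).mul (hu.hasFDerivAt.rpow_const (p := q) (Or.inl hux))
  refine HasGradientAt.gradient (hasGradientAt_iff_hasFDerivAt.2 (h.congr_fderiv ?_))
  ext v
  simp [toDual_gradient]
  ring

end Gradient

section TestFunctions

variable {E : Type*} [NormedAddCommGroup E] [InnerProductSpace ℝ E] [FiniteDimensional ℝ E]
  [MeasurableSpace E] [BorelSpace E] {μ : Measure E} {V : E → E}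

lemma integrable_inner_of_hasCompactSupport (hV : LocallyIntegrable V μ) {W : E → E}
    (hW : Continuous W) (hW_supp : HasCompactSupport W) : Integrable (fun x ↦ ⟪V x, W x⟫) μ := by
  obtain ⟨C, hC⟩ := hW.bounded_above_of_compact_support hW_supp
  refine (integrableOn_iff_integrable_of_support_subset (s := tsupport W) fun x hx ↦
    subset_tsupport W fun h ↦ hx (by simp only [h, inner_zero_right])).1 ?_
  have hV_int : IntegrableOn V (tsupport W) μ := hV.integrableOn_isCompact hW_supp
  refine (hV_int.norm.mul_const C).mono'
    (hV_int.aestronglyMeasurable.inner hW.aestronglyMeasurable) (.of_forall fun x ↦ ?_)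
  exact (norm_inner_le_norm _ _).trans (mul_le_mul_of_nonneg_left (hC x) (norm_nonneg _))

lemma integrable_inner_gradient_of_hasCompactSupport (hV : LocallyIntegrable V μ) {ψ : E → ℝ}
    (hψ : ContDiff ℝ 1 ψ) (hψ_supp : HasCompactSupport ψ) :
    Integrable (fun x ↦ ⟪V x, ∇ ψ x⟫) μ :=
  integrable_inner_of_hasCompactSupport hV (continuous_gradient_of_contDiff_one hψ)
    (hψ_supp.of_isClosed_subset (isClosed_tsupport _) (tsupport_gradient_subset ψ))

lemma integral_inner_gradient_sub_le (hV : LocallyIntegrable V μ) {φ ψ : E → ℝ}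
    (hφ : ContDiff ℝ 1 φ) (hψ : ContDiff ℝ 1 ψ) {K : Set E} (hK : IsCompact K)
    (hφK : tsupport φ ⊆ K) (hψK : tsupport ψ ⊆ K) {ε : ℝ} (hε : ∀ x, ‖∇ ψ x - ∇ φ x‖ ≤ ε) :
    ∫ x, ⟪V x, ∇ ψ x⟫ ∂μ - ∫ x, ⟪V x, ∇ φ x⟫ ∂μ ≤ ε * ∫ x in K, ‖V x‖ ∂μ := by
  have hφ_int := integrable_inner_gradient_of_hasCompactSupport hV hφ
    (hK.of_isClosed_subset (isClosed_tsupport φ) hφK)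
  have hψ_int := integrable_inner_gradient_of_hasCompactSupport hV hψ
    (hK.of_isClosed_subset (isClosed_tsupport ψ) hψK)
  have gradient_eq_zero : ∀ χ : E → ℝ, tsupport χ ⊆ K → ∀ x ∉ K, ∇ χ x = 0 := fun χ hχ x hx ↦
    image_eq_zero_of_notMem_tsupport fun h ↦ hx (hχ (tsupport_gradient_subset χ h))
  calc ∫ x, ⟪V x, ∇ ψ x⟫ ∂μ - ∫ x, ⟪V x, ∇ φ x⟫ ∂μ
      = ∫ x, (⟪V x, ∇ ψ x⟫ - ⟪V x, ∇ φ x⟫) ∂μ := (integral_sub hψ_int hφ_int).symm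
    _ = ∫ x in K, (⟪V x, ∇ ψ x⟫ - ⟪V x, ∇ φ x⟫) ∂μ :=
        (setIntegral_eq_integral_of_forall_compl_eq_zero fun x hx ↦ by
          rw [gradient_eq_zero ψ hψK x hx, gradient_eq_zero φ hφK x hx, sub_self]).symm
    _ ≤ ∫ x in K, ε * ‖V x‖ ∂μ := by
        refine integral_mono (hψ_int.sub hφ_int).integrableOn
          ((hV.integrableOn_isCompact hK).norm.const_mul ε) fun x ↦ ?_
        calc ⟪V x, ∇ ψ x⟫ - ⟪V x, ∇ φ x⟫ = ⟪∇ ψ x - ∇ φ x, V x⟫ := by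
              rw [← inner_sub_right, real_inner_comm]
          _ ≤ ‖∇ ψ x - ∇ φ x‖ * ‖V x‖ := real_inner_le_norm _ _
          _ ≤ ε * ‖V x‖ := mul_le_mul_of_nonneg_right (hε x) (norm_nonneg _)
    _ = ε * ∫ x in K, ‖V x‖ ∂μ := integral_const_mul _ _

lemma integral_inner_gradient_nonpos_of_contDiff_one (hV : LocallyIntegrable V μ)
    (hV_weak : ∀ φ : E → ℝ, ContDiff ℝ ∞ φ → HasCompactSupport φ → (∀ x, 0 ≤ φ x) →
      ∫ x, ⟪V x, ∇ φ x⟫ ∂μ ≤ 0)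
    {ψ : E → ℝ} (hψ : ContDiff ℝ 1 ψ) (hψ_supp : HasCompactSupport ψ) (hψ0 : ∀ x, 0 ≤ ψ x) :
    ∫ x, ⟪V x, ∇ ψ x⟫ ∂μ ≤ 0 := by
  set K := cthickening 1 (tsupport ψ)
  have hK : IsCompact K := hψ_supp.isCompact.cthickening
  have h_le : ∀ ε > 0, ∫ x, ⟪V x, ∇ ψ x⟫ ∂μ ≤ ε * ∫ x in K, ‖V x‖ ∂μ := by
    intro ε hε
    obtain ⟨φ, hφ, hφ0, hφK, hφε⟩ :=
      exists_contDiff_norm_fderiv_sub_le hψ hψ_supp hψ0 one_pos hε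
    have h_norm : ∀ x, ‖∇ ψ x - ∇ φ x‖ ≤ ε := fun x ↦ by
      rw [gradient, gradient, ← map_sub, LinearIsometryEquiv.norm_map]
      exact hφε x
    have hφ_nonpos := hV_weak φ hφ (hK.of_isClosed_subset (isClosed_tsupport φ) hφK) hφ0
    have h_sub := integral_inner_gradient_sub_le hV (hφ.of_le (by simp)) hψ hK hφK
      (self_subset_cthickening _) h_norm
    linarith
  have h_tendsto : Tendsto (fun ε : ℝ ↦ ε * ∫ x in K, ‖V x‖ ∂μ) (𝓝[>] 0) (𝓝 0) := by
    refine tendsto_nhdsWithin_of_tendsto_nhds ?_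
    simpa only [zero_mul] using (continuous_mul_const (∫ x in K, ‖V x‖ ∂μ)).tendsto 0
  exact ge_of_tendsto h_tendsto (eventually_mem_nhdsWithin.mono h_le)

end TestFunctions

/-- Weak subharmonicity with the Lebesgue measure replaced by an arbitrary measure `μ` on a
Hilbert space: `∫ ⟪∇f, ∇ψ⟫ dμ ≤ 0` for all non-negative smooth compactly supported `ψ`.
For `μ = e⁻ʰ dx` this says that `f` is subharmonic for the drift Laplacian `Δ - ⟪∇h, ∇·⟫`. -/
def WeaklySubharmonicWRT {E : Type*} [NormedAddCommGroup E] [InnerProductSpace ℝ E]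
    [CompleteSpace E] [MeasurableSpace E] (μ : Measure E) (f : E → ℝ) : Prop :=
  ∀ ψ : E → ℝ, ContDiff ℝ ∞ ψ → HasCompactSupport ψ → (∀ x, 0 ≤ ψ x) →
    ∫ x, ⟪∇ f x, ∇ ψ x⟫ ∂μ ≤ 0

lemma WeaklySubharmonicWRT.add_const {E : Type*} [NormedAddCommGroup E] [InnerProductSpace ℝ E]
    [CompleteSpace E] [MeasurableSpace E] {μ : Measure E} {f : E → ℝ}
    (hf : WeaklySubharmonicWRT μ f) (c : ℝ) : WeaklySubharmonicWRT μ (fun x ↦ f x + c) := by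
  rw [WeaklySubharmonicWRT, gradient_add_const]
  exact hf

section Fatou

variable {α : Type*} [MeasurableSpace α] {μ : Measure α}

lemma lintegral_enorm_le_of_tendsto_of_integral_le {F : ℕ → α → ℝ} {G : α → ℝ} {b : ℕ → ℝ} {B : ℝ}
    (hF : ∀ k, Integrable (F k) μ) (hF0 : ∀ k, 0 ≤ᵐ[μ] F k)
    (hFG : ∀ᵐ x ∂μ, Tendsto (F · x) atTop (𝓝 (G x)))
    (hFb : ∀ k, ∫ x, F k x ∂μ ≤ b k) (hbB : Tendsto b atTop (𝓝 B)) :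
    ∫⁻ x, ‖G x‖ₑ ∂μ ≤ ENNReal.ofReal B := by
  calc ∫⁻ x, ‖G x‖ₑ ∂μ = ∫⁻ x, liminf (fun k ↦ ‖F k x‖ₑ) atTop ∂μ :=
        lintegral_congr_ae (hFG.mono fun x hx ↦ hx.enorm.liminf_eq.symm)
    _ ≤ liminf (fun k ↦ ∫⁻ x, ‖F k x‖ₑ ∂μ) atTop :=
        lintegral_liminf_le' fun k ↦ (hF k).aestronglyMeasurable.enorm
    _ ≤ liminf (fun k ↦ ENNReal.ofReal (b k)) atTop := by
        refine liminf_le_liminf (.of_forall fun k ↦ ?_)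
        rw [← ofReal_integral_norm_eq_lintegral_enorm (hF k),
          integral_congr_ae ((hF0 k).mono fun x hx ↦ Real.norm_of_nonneg hx)]
        exact ENNReal.ofReal_le_ofReal (hFb k)
    _ = ENNReal.ofReal B := (ENNReal.tendsto_ofReal hbB).liminf_eq

lemma integrable_and_integral_le_of_tendsto {F : ℕ → α → ℝ} {G : α → ℝ} {b : ℕ → ℝ} {B : ℝ}
    (hF : ∀ k, Integrable (F k) μ) (hF0 : ∀ k, 0 ≤ᵐ[μ] F k)
    (hFG : ∀ᵐ x ∂μ, Tendsto (F · x) atTop (𝓝 (G x)))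
    (hFb : ∀ k, ∫ x, F k x ∂μ ≤ b k) (hbB : Tendsto b atTop (𝓝 B)) :
    Integrable G μ ∧ ∫ x, G x ∂μ ≤ B := by
  have h_le := lintegral_enorm_le_of_tendsto_of_integral_le hF hF0 hFG hFb hbB
  have hG : Integrable G μ := ⟨aestronglyMeasurable_of_tendsto_ae _
    (fun k ↦ (hF k).aestronglyMeasurable) hFG, h_le.trans_lt ENNReal.ofReal_lt_top⟩
  have hB : 0 ≤ B := ge_of_tendsto' hbB fun k ↦ (integral_nonneg_of_ae (hF0 k)).trans (hFb k)
  refine ⟨hG, (integral_mono hG hG.norm fun x ↦ Real.le_norm_self _).trans ?_⟩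
  rwa [← ENNReal.ofReal_le_ofReal_iff hB, ofReal_integral_norm_eq_lintegral_enorm hG]

end Fatou

section Caccioppoli

variable {E : Type*} [NormedAddCommGroup E] [InnerProductSpace ℝ E]

/- With `q = p - 1` and `s` the value of the function, the difference of the two sides is
`s ^ (p - 2) / q ^ 2` times the square of the norm of `(q * c) • v + (2 * s) • w`. -/
lemma sq_mul_rpow_mul_sq_sub_le {p s : ℝ} (hp : 1 < p) (hs : 0 < s) (c : ℝ) (v w : E) :
    c ^ 2 * (s ^ (p - 2) * ‖v‖ ^ 2) - 4 / (p - 1) ^ 2 * (s ^ p * ‖w‖ ^ 2) ≤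
      2 / (p - 1) * ⟪v, ((p - 1) * c ^ 2 * s ^ (p - 1 - 1)) • v + (2 * c * s ^ (p - 1)) • w⟫ := by
  have hq : 0 < p - 1 := sub_pos.2 hp
  have h_exp_one : s ^ (p - 1) = s ^ (p - 2) * s := by
    rw [← Real.rpow_add_one hs.ne']; ring_nf
  have h_exp_two : s ^ p = s ^ (p - 2) * s ^ 2 := by
    rw [← Real.rpow_add_natCast hs.ne']; norm_num
  have h_square : 0 ≤ s ^ (p - 2) / (p - 1) ^ 2 * ‖((p - 1) * c) • v + (2 * s) • w‖ ^ 2 := by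
    positivity
  rw [norm_add_sq_real, norm_smul, norm_smul, mul_pow, mul_pow, Real.norm_eq_abs,
    Real.norm_eq_abs, sq_abs, sq_abs, inner_smul_left, inner_smul_right] at h_square
  rw [inner_add_right, inner_smul_right, inner_smul_right, real_inner_self_eq_norm_sq,
    h_exp_one, h_exp_two, show p - 1 - 1 = p - 2 by ring, ← sub_nonneg]
  refine h_square.trans_eq ?_
  simp only [conj_trivial]
  field_simp
  ring

variable [FiniteDimensional ℝ E] [MeasurableSpace E] [BorelSpace E] {μ : Measure E}
  [IsLocallyFiniteMeasure μ] {p : ℝ} {f φ : E → ℝ}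

lemma integrable_sq_mul_rpow_mul_norm_gradient_sq (hf : ContDiff ℝ 1 f) (hpos : ∀ x, 0 < f x)
    (hφ : Continuous φ) (hφ_supp : HasCompactSupport φ) (q : ℝ) :
    Integrable (fun x ↦ φ x ^ 2 * (f x ^ q * ‖∇ f x‖ ^ 2)) μ :=
  ((hφ.pow 2).mul ((hf.continuous.rpow_const fun x ↦ Or.inl (hpos x).ne').mul
    ((continuous_gradient_of_contDiff_one hf).norm.pow 2))).integrable_of_hasCompactSupport <|
      hφ_supp.mono fun x hx h ↦ hx (by simp [h])

lemma integrable_rpow_mul_norm_gradient_sq (hf : Continuous f) (hp : 0 ≤ p)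
    (hφ : ContDiff ℝ 1 φ) (hφ_supp : HasCompactSupport φ) :
    Integrable (fun x ↦ f x ^ p * ‖∇ φ x‖ ^ 2) μ := by
  refine ((hf.rpow_const fun _ ↦ Or.inr hp).mul
    ((continuous_gradient_of_contDiff_one hφ).norm.pow 2)).integrable_of_hasCompactSupport ?_
  exact hφ_supp.mono' fun x hx ↦ tsupport_gradient_subset φ <| subset_tsupport _ fun h ↦
    hx (by simp [h])

theorem WeaklySubharmonicWRT.integral_sq_mul_rpow_mul_norm_gradient_sq_le_of_pos
    (hsub : WeaklySubharmonicWRT μ f) (hp : 1 < p) (hf : ContDiff ℝ 1 f) (hpos : ∀ x, 0 < f x)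
    (hφ : ContDiff ℝ 1 φ) (hφ_supp : HasCompactSupport φ) :
    ∫ x, φ x ^ 2 * (f x ^ (p - 2) * ‖∇ f x‖ ^ 2) ∂μ ≤
      4 / (p - 1) ^ 2 * ∫ x, f x ^ p * ‖∇ φ x‖ ^ 2 ∂μ := by
  let ψ : E → ℝ := fun x ↦ φ x ^ 2 * f x ^ (p - 1)
  have hψ : ContDiff ℝ 1 ψ := (hφ.pow 2).mul (hf.rpow_const_of_ne fun x ↦ (hpos x).ne')
  have hψ_supp : HasCompactSupport ψ := hφ_supp.mono fun x hx h ↦ hx (by simp [ψ, h])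
  have h_locInt : LocallyIntegrable (∇ f) μ :=
    (continuous_gradient_of_contDiff_one hf).locallyIntegrable
  have h_weak : ∫ x, ⟪∇ f x, ∇ ψ x⟫ ∂μ ≤ 0 :=
    integral_inner_gradient_nonpos_of_contDiff_one h_locInt hsub hψ hψ_supp
      fun x ↦ mul_nonneg (sq_nonneg _) (Real.rpow_nonneg (hpos x).le _)
  have h_int_inner : Integrable (fun x ↦ ⟪∇ f x, ∇ ψ x⟫) μ :=
    integrable_inner_gradient_of_hasCompactSupport h_locInt hψ hψ_supp
  have h_int_left := integrable_sq_mul_rpow_mul_norm_gradient_sq (μ := μ) hf hpos hφ.continuous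
    hφ_supp (p - 2)
  have h_int_right := integrable_rpow_mul_norm_gradient_sq (μ := μ) hf.continuous
    (zero_le_one.trans hp.le) hφ hφ_supp
  have h_pointwise : ∀ x, φ x ^ 2 * (f x ^ (p - 2) * ‖∇ f x‖ ^ 2) -
      4 / (p - 1) ^ 2 * (f x ^ p * ‖∇ φ x‖ ^ 2) ≤ 2 / (p - 1) * ⟪∇ f x, ∇ ψ x⟫ := fun x ↦ by
    rw [gradient_sq_mul_rpow (hf.differentiable one_ne_zero x) (hφ.differentiable one_ne_zero x)
      (hpos x).ne']
    exact sq_mul_rpow_mul_sq_sub_le hp (hpos x) _ _ _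
  have h_integral := integral_mono (h_int_left.sub (h_int_right.const_mul _))
    (h_int_inner.const_mul _) h_pointwise
  rw [integral_sub' h_int_left (h_int_right.const_mul _), integral_const_mul,
    integral_const_mul] at h_integral
  have h_nonpos := mul_nonpos_of_nonneg_of_nonpos
    (div_nonneg zero_le_two (sub_nonneg.2 hp.le)) h_weak
  linarith

lemma tendsto_integral_add_rpow_mul_norm_gradient_sq (hf : Continuous f) (hp : 0 ≤ p)
    (hφ : ContDiff ℝ 1 φ) (hφ_supp : HasCompactSupport φ) :
    Tendsto (fun δ ↦ ∫ x, (f x + δ) ^ p * ‖∇ φ x‖ ^ 2 ∂μ) (𝓝 0)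
      (𝓝 (∫ x, f x ^ p * ‖∇ φ x‖ ^ 2 ∂μ)) := by
  have h_cont : Continuous fun q : ℝ × E ↦ (f q.2 + q.1) ^ p * ‖∇ φ q.2‖ ^ 2 :=
    (((hf.comp continuous_snd).add continuous_fst).rpow_const fun _ ↦ Or.inr hp).mul
      (((continuous_gradient_of_contDiff_one hφ).comp continuous_snd).norm.pow 2)
  have h_integral := continuousOn_integral_of_compact_support (μ := μ) (s := Set.univ)
    (f := fun δ x ↦ (f x + δ) ^ p * ‖∇ φ x‖ ^ 2) hφ_supp.isCompact h_cont.continuousOn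
    fun δ x _ hx ↦ by
      simp [image_eq_zero_of_notMem_tsupport fun h ↦ hx (tsupport_gradient_subset φ h)]
  simpa only [add_zero] using (continuousOn_univ.1 h_integral).tendsto 0

theorem WeaklySubharmonicWRT.integrable_and_integral_sq_mul_rpow_mul_norm_gradient_sq_le
    (hsub : WeaklySubharmonicWRT μ f) (hp : 1 < p) (hf : ContDiff ℝ 1 f) (hf0 : ∀ x, 0 ≤ f x)
    (hφ : ContDiff ℝ 1 φ) (hφ_supp : HasCompactSupport φ) :
    Integrable (fun x ↦ φ x ^ 2 * (f x ^ (p - 2) * ‖∇ f x‖ ^ 2)) μ ∧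
      ∫ x, φ x ^ 2 * (f x ^ (p - 2) * ‖∇ f x‖ ^ 2) ∂μ ≤
        4 / (p - 1) ^ 2 * ∫ x, f x ^ p * ‖∇ φ x‖ ^ 2 ∂μ := by
  let δ : ℕ → ℝ := fun k ↦ 1 / ((k : ℝ) + 1)
  have hδ : Tendsto δ atTop (𝓝 0) := tendsto_one_div_add_atTop_nhds_zero_nat
  have hpos : ∀ k x, 0 < f x + δ k := fun k x ↦
    add_pos_of_nonneg_of_pos (hf0 x) Nat.one_div_pos_of_nat
  have hf_add : ∀ k, ContDiff ℝ 1 fun x ↦ f x + δ k := fun k ↦ hf.add contDiff_const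
  refine integrable_and_integral_le_of_tendsto
    (F := fun k x ↦ φ x ^ 2 * ((f x + δ k) ^ (p - 2) * ‖∇ f x‖ ^ 2))
    (b := fun k ↦ 4 / (p - 1) ^ 2 * ∫ x, (f x + δ k) ^ p * ‖∇ φ x‖ ^ 2 ∂μ)
    (fun k ↦ ?_) (fun k ↦ .of_forall fun x ↦ ?_) (.of_forall fun x ↦ ?_) (fun k ↦ ?_) ?_
  · simpa only [gradient_add_const] using integrable_sq_mul_rpow_mul_norm_gradient_sq
      (hf_add k) (hpos k) hφ.continuous hφ_supp (p - 2)
  · exact mul_nonneg (sq_nonneg _) (mul_nonneg (Real.rpow_nonneg (hpos k x).le _) (sq_nonneg _))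
  · exact ((tendsto_add_rpow_mul_norm_gradient_sq hf0 (p - 2) x).comp hδ).const_mul _
  · simpa only [gradient_add_const] using
      (hsub.add_const (δ k)).integral_sq_mul_rpow_mul_norm_gradient_sq_le_of_pos hp
        (hf_add k) (hpos k) hφ hφ_supp
  · exact ((tendsto_integral_add_rpow_mul_norm_gradient_sq hf.continuous
      (zero_le_one.trans hp.le) hφ hφ_supp).comp hδ).const_mul _

lemma integral_rpow_mul_norm_gradient_sq_le (hf : Continuous f) (hf0 : ∀ x, 0 ≤ f x) (hp : 0 ≤ p)
    (hφ : ContDiff ℝ 1 φ) {T : Set E} (hT : Bornology.IsBounded T) (hφT : tsupport φ ⊆ T)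
    {L : ℝ} (hφL : ∀ x, ‖∇ φ x‖ ≤ L) :
    ∫ x, f x ^ p * ‖∇ φ x‖ ^ 2 ∂μ ≤ L ^ 2 * ∫ x in T, f x ^ p ∂μ := by
  have hφ_supp : HasCompactSupport φ :=
    isCompact_of_isClosed_isBounded (isClosed_tsupport φ) (hT.subset hφT)
  have hf_int : IntegrableOn (fun x ↦ f x ^ p) T μ :=
    ((hf.rpow_const fun _ ↦ Or.inr hp).continuousOn.integrableOn_compact
      hT.isCompact_closure).mono_set subset_closure
  rw [← integral_const_mul, ← setIntegral_eq_integral_of_forall_compl_eq_zero (s := T) fun x hx ↦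
    by simp [image_eq_zero_of_notMem_tsupport fun h ↦ hx (hφT (tsupport_gradient_subset φ h))]]
  refine integral_mono (integrable_rpow_mul_norm_gradient_sq hf hp hφ hφ_supp).integrableOn
    (hf_int.const_mul _) fun x ↦ ?_
  rw [mul_comm]
  exact mul_le_mul_of_nonneg_right (pow_le_pow_left₀ (norm_nonneg _) (hφL x) 2)
    (Real.rpow_nonneg (hf0 x) p)

theorem WeaklySubharmonicWRT.integrableOn_and_setIntegral_rpow_mul_norm_gradient_sq_le
    (hsub : WeaklySubharmonicWRT μ f) (hp : 1 < p) (hf : ContDiff ℝ 1 f) (hf0 : ∀ x, 0 ≤ f x)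
    {S : Set E} (hS : Bornology.IsBounded S) {κ δ : ℝ} (hκ : 0 < κ) (hκδ : κ < δ) :
    IntegrableOn (fun x ↦ f x ^ (p - 2) * ‖∇ f x‖ ^ 2) S μ ∧
      ∫ x in S, f x ^ (p - 2) * ‖∇ f x‖ ^ 2 ∂μ ≤
        4 / (p - 1) ^ 2 / κ ^ 2 * ∫ x in thickening δ S, f x ^ p ∂μ := by
  obtain ⟨φ, hφ_smooth, hφ_one, hφ_supp, hφκ⟩ := exists_contDiff_cutoff (closure S) hκ hκδ
  rw [thickening_closure] at hφ_supp
  have hφ : ContDiff ℝ 1 φ := hφ_smooth.of_le (by simp)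
  have h_supp_bounded := hS.thickening (δ := δ)
  obtain ⟨h_int, h_le⟩ := hsub.integrable_and_integral_sq_mul_rpow_mul_norm_gradient_sq_le hp hf
    hf0 hφ (isCompact_of_isClosed_isBounded (isClosed_tsupport φ) (h_supp_bounded.subset hφ_supp))
  have h_nonneg : ∀ x, 0 ≤ f x ^ (p - 2) * ‖∇ f x‖ ^ 2 := fun x ↦
    mul_nonneg (Real.rpow_nonneg (hf0 x) _) (sq_nonneg _)
  have h_eq : Set.EqOn (fun x ↦ φ x ^ 2 * (f x ^ (p - 2) * ‖∇ f x‖ ^ 2))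
      (fun x ↦ f x ^ (p - 2) * ‖∇ f x‖ ^ 2) (closure S) := fun x hx ↦ by
    simp only [hφ_one x hx, one_pow, one_mul]
  have h_int_closure : IntegrableOn (fun x ↦ f x ^ (p - 2) * ‖∇ f x‖ ^ 2) (closure S) μ :=
    h_int.integrableOn.congr_fun h_eq measurableSet_closure
  refine ⟨h_int_closure.mono_set subset_closure, ?_⟩
  calc ∫ x in S, f x ^ (p - 2) * ‖∇ f x‖ ^ 2 ∂μ
      ≤ ∫ x in closure S, f x ^ (p - 2) * ‖∇ f x‖ ^ 2 ∂μ :=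
        setIntegral_mono_set h_int_closure (.of_forall h_nonneg) subset_closure.eventuallyLE
    _ = ∫ x in closure S, φ x ^ 2 * (f x ^ (p - 2) * ‖∇ f x‖ ^ 2) ∂μ :=
        (setIntegral_congr_fun measurableSet_closure h_eq).symm
    _ ≤ ∫ x, φ x ^ 2 * (f x ^ (p - 2) * ‖∇ f x‖ ^ 2) ∂μ :=
        setIntegral_le_integral h_int (.of_forall fun x ↦ mul_nonneg (sq_nonneg _) (h_nonneg x))
    _ ≤ 4 / (p - 1) ^ 2 * ∫ x, f x ^ p * ‖∇ φ x‖ ^ 2 ∂μ := h_le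
    _ ≤ 4 / (p - 1) ^ 2 * (κ⁻¹ ^ 2 * ∫ x in thickening δ S, f x ^ p ∂μ) := by
        refine mul_le_mul_of_nonneg_left ?_ (by positivity)
        exact integral_rpow_mul_norm_gradient_sq_le hf.continuous hf0 (zero_le_one.trans hp.le) hφ
          h_supp_bounded hφ_supp fun x ↦ (norm_gradient_eq_norm_fderiv φ x).trans_le (hφκ x)
    _ = 4 / (p - 1) ^ 2 / κ ^ 2 * ∫ x in thickening δ S, f x ^ p ∂μ := by ring

theorem stmt_6_general (hp : 1 < p) (hf : ContDiff ℝ 1 f) (hf0 : ∀ x, 0 ≤ f x)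
    (hsub : WeaklySubharmonicWRT μ f) {S : Set E} (hS : Bornology.IsBounded S) {δ : ℝ}
    (hδ : 0 < δ) :
    IntegrableOn (fun x ↦ f x ^ (p - 2) * ‖∇ f x‖ ^ 2) S μ ∧
      ∫ x in S, f x ^ (p - 2) * ‖∇ f x‖ ^ 2 ∂μ ≤
        4 / (p - 1) ^ 2 / δ ^ 2 * ∫ x in thickening δ S, f x ^ p ∂μ := by
  have h_lt {κ : ℝ} (hκ : κ ∈ Set.Ioo 0 δ) :=
    hsub.integrableOn_and_setIntegral_rpow_mul_norm_gradient_sq_le hp hf hf0 hS hκ.1 hκ.2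
  refine ⟨(h_lt ⟨half_pos hδ, half_lt_self hδ⟩).1, ?_⟩
  have h_tendsto : Tendsto (fun κ ↦ 4 / (p - 1) ^ 2 / κ ^ 2 * ∫ x in thickening δ S, f x ^ p ∂μ)
      (𝓝[<] δ) (𝓝 (4 / (p - 1) ^ 2 / δ ^ 2 * ∫ x in thickening δ S, f x ^ p ∂μ)) :=
    ((tendsto_const_nhds.div ((continuous_pow 2).tendsto δ) (by positivity)).mul_const _).mono_left
      nhdsWithin_le_nhds
  exact ge_of_tendsto h_tendsto (eventually_of_mem (Ioo_mem_nhdsLT hδ) fun _ hκ ↦ (h_lt hκ).2)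

end Caccioppoli

theorem stmt_6 {n : ℕ} (hn : 1 ≤ n) (p : ℝ) (hp : 1 < p)
    (f : EuclideanSpace ℝ (Fin n) → ℝ)
    (hf : ContDiff ℝ 1 f) (hf0 : ∀ x, 0 ≤ f x)
    (hsub : WeaklySubharmonic f) :
    ∃ C : ℝ, 0 < C ∧ C = 4 / (p - 1) ^ 2 ∧ ∀ R : ℝ, 0 < R →
      ∫ x in ball (0 : EuclideanSpace ℝ (Fin n)) R, f x ^ (p - 2) * ‖gradient f x‖ ^ 2 ≤
        C / R ^ 2 * ∫ x in ball (0 : EuclideanSpace ℝ (Fin n)) (2 * R), f x ^ p := by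
  refine ⟨4 / (p - 1) ^ 2, div_pos four_pos (pow_pos (sub_pos.2 hp) 2), rfl, fun R hR ↦ ?_⟩
  simpa only [thickening_ball hR hR, two_mul] using
    (stmt_6_general hp hf hf0 hsub (isBounded_ball (x := 0) (r := R)) hR).2
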